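/- Let B be a symplectic form on a 2J-dimensional vector space V over F_2 with J > 4, and let D ⊆ V be an affine quadric with #D = 2^{J−1}(2^J+1). Let Ψ̂_D = (ψ̂_v)_{v∈D} be a family of vectors in a real inner product space with ⟨ψ̂_v, ψ̂_v⟩ = 2^{J−1} + 1 for all v ∈ D and ⟨ψ̂_{v₁}, ψ̂_{v₂}⟩ = (−1)^{B(v₁,v₂)} for distinct v₁, v₂ ∈ D (such a family is an ETF of 2^{J−1}(2^J+1) vectors for a space of dimension (2^{J−1}+1)(2^J+1)/3). Then bin(Ψ̂_D) is empty; equivalently, there is no subset K ⊆ D with #K = 2^{J−1} + 2 such that B(v₁+v₃, v₂+v₃) = 1 for all pairwise distinct v₁, v₂, v₃ ∈ K. -/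

import Mathlib

open scoped BigOperators

noncomputable section

/-- ETF predicate. -/
def IsETF (𝕜 : Type*) {E ι : Type*} [RCLike 𝕜] [NormedAddCommGroup E]
    [InnerProductSpace 𝕜 E] [Fintype ι] (φ : ι → E) : Prop :=
  (∃ S : ℝ, 0 < S ∧ ∀ n, (inner 𝕜 (φ n) (φ n) : 𝕜) = (S : 𝕜)) ∧
  (∃ C : ℝ, 0 < C ∧ ∀ n₁ n₂, n₁ ≠ n₂ → ‖(inner 𝕜 (φ n₁) (φ n₂) : 𝕜)‖ = C) ∧
  (∃ A : ℝ, 0 < A ∧ ∀ n₁ n₃,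
      (∑ n₂, (inner 𝕜 (φ n₁) (φ n₂) : 𝕜) * (inner 𝕜 (φ n₂) (φ n₃) : 𝕜)) =
        (A : 𝕜) * (inner 𝕜 (φ n₁) (φ n₃) : 𝕜))

/-- Regular simplex predicate for a subfamily. -/
def IsRegularSimplex (𝕜 : Type*) {E ι : Type*} [RCLike 𝕜] [NormedAddCommGroup E]
    [InnerProductSpace 𝕜 E] [Fintype ι] (φ : ι → E) (K : Finset ι) : Prop :=
  IsETF 𝕜 (fun k : K => φ k.1) ∧
  Module.finrank 𝕜 (Submodule.span 𝕜 (φ '' (K : Set ι))) + 1 = K.card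

/-- The binder of a family. -/
def binder (𝕜 : Type*) {E ι : Type*} [RCLike 𝕜] [NormedAddCommGroup E]
    [InnerProductSpace 𝕜 E] [Fintype ι] (φ : ι → E) : Set (Finset ι) :=
  {K | IsRegularSimplex 𝕜 φ K}

/-- A bilinear form is symplectic: alternating and nondegenerate. -/
def IsSymplectic {F V : Type*} [CommRing F] [AddCommGroup V] [Module F V]
    (B : V →ₗ[F] V →ₗ[F] F) : Prop :=
  (∀ v, B v v = 0) ∧ ∀ v : V, v ≠ 0 → ∃ w, B v w ≠ 0

/-- `Q` is a quadratic form yielding the bilinear form `B` over `F₂`. -/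
def YieldsForm {V : Type*} [AddCommGroup V] [Module (ZMod 2) V]
    (B : V →ₗ[ZMod 2] V →ₗ[ZMod 2] ZMod 2) (Q : V → ZMod 2) : Prop :=
  ∀ v₁ v₂ : V, Q (v₁ + v₂) + Q v₁ + Q v₂ = B v₁ v₂

/-- The quadric of a quadratic form: its set of zeros. -/
def quadric {V : Type*} (Q : V → ZMod 2) : Set V := {v | Q v = 0}

/-- A subset is an affine quadric if it or its complement is the quadric of
some quadratic form yielding `B`. -/
def IsAffineQuadric {V : Type*} [AddCommGroup V] [Module (ZMod 2) V]
    (B : V →ₗ[ZMod 2] V →ₗ[ZMod 2] ZMod 2) (D : Set V) : Prop :=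
  ∃ Q : V → ZMod 2, YieldsForm B Q ∧ (D = quadric Q ∨ D = (quadric Q)ᶜ)

/-- A bound on sets of vectors all of whose triples are "odd". -/
theorem no_odd_set {J : ℕ} (hJ : 4 < J)
    {V : Type*} [AddCommGroup V] [Module (ZMod 2) V] [Fintype V] [DecidableEq V]
    (hdim : Module.finrank (ZMod 2) V = 2 * J)
    (B : V →ₗ[ZMod 2] V →ₗ[ZMod 2] ZMod 2) (hB : ∀ v, B v v = 0)
    (K : Finset V) (hK : K.card = 2 ^ (J - 1) + 2)
    (h : ∀ v₁ ∈ K, ∀ v₂ ∈ K, ∀ v₃ ∈ K,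
        v₁ ≠ v₂ → v₂ ≠ v₃ → v₁ ≠ v₃ → B (v₁ + v₃) (v₂ + v₃) = 1) : False := by
  obtain ⟨a, ha⟩ : K.Nonempty := by
    rw [← Finset.card_pos, hK]; positivity
  have h1 : (K.erase a).card = 2 ^ (J - 1) + 1 := by
    rw [Finset.card_erase_of_mem ha, hK]; rfl
  obtain ⟨b, hb⟩ : (K.erase a).Nonempty := by
    rw [← Finset.card_pos, h1]; positivity
  have h2 : ((K.erase a).erase b).card = 2 ^ (J - 1) := by
    rw [Finset.card_erase_of_mem hb, h1]; rfl
  set L := (K.erase a).erase b with hL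
  have hbK := Finset.mem_of_mem_erase hb
  have hba := Finset.ne_of_mem_erase hb
  have hmem : ∀ v : L, v.1 ∈ K ∧ v.1 ≠ a ∧ v.1 ≠ b := by
    rintro ⟨v, hv⟩
    simp only [hL, Finset.mem_erase] at hv
    exact ⟨hv.2.2, hv.2.1, hv.1⟩
  have hli : LinearIndependent (ZMod 2) (fun v : L => v.1 + a) := by
    rw [Fintype.linearIndependent_iff]
    intro g hg w
    have e1 : ∑ v, g v = 0 := by
      have := congrArg (fun x => B (b + a) x) hg
      simp only [map_sum, map_smul, map_zero] at this
      rw [← this]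
      refine Finset.sum_congr rfl fun v _ => ?_
      rw [h b hbK v.1 (hmem v).1 a ha (hmem v).2.2.symm (hmem v).2.1 hba]
      simp
    have e2 : ∑ v, g v - g w = 0 := by
      have := congrArg (fun x => B (w.1 + a) x) hg
      simp only [map_sum, map_smul, map_zero] at this
      rw [← this, ← Finset.add_sum_erase _ _ (Finset.mem_univ w),
        ← Finset.add_sum_erase (Finset.univ) (fun x => g x • (B (w.1 + a)) (x.1 + a))
          (Finset.mem_univ w), hB]
      simp only [smul_zero, zero_add, add_sub_cancel_left]
      refine Finset.sum_congr rfl fun v hv => ?_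
      have hvw := Finset.ne_of_mem_erase hv
      rw [h w.1 (hmem w).1 v.1 (hmem v).1 a ha (fun hh => hvw (Subtype.ext hh.symm))
        (hmem v).2.1 (hmem w).2.1]
      simp
    rw [e1] at e2
    simpa using e2
  have hle := hli.fintype_card_le_finrank
  rw [hdim, Fintype.card_coe, h2] at hle
  have : ∀ m : ℕ, 2 * (m + 5) < 2 ^ (m + 4) := by
    intro m
    induction m with
    | zero => norm_num
    | succ k ih => rw [show k + 1 + 4 = (k + 4) + 1 by ring, pow_succ]; omega
  have h3 := this (J - 5)
  rw [show J - 5 + 4 = J - 1 by omega, show J - 5 + 5 = J by omega] at h3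
  omega

/-- Structure of the Gram matrix of a regular simplex. -/
theorem simplex_gram {E ι : Type*} [NormedAddCommGroup E] [InnerProductSpace ℝ E]
    [Fintype ι] [DecidableEq ι] (φ : ι → E) (S A : ℝ) (hS : 0 < S)
    (hd : ∀ i, inner ℝ (φ i) (φ i) = S)
    (ho : ∀ i j, i ≠ j → inner ℝ (φ i) (φ j) * inner ℝ (φ i) (φ j) = (1 : ℝ))
    (hA : ∀ i k, ∑ j, inner ℝ (φ i) (φ j) * inner ℝ (φ j) (φ k) = A * inner ℝ (φ i) (φ k))
    (hr : Module.finrank ℝ (Submodule.span ℝ (Set.range φ)) + 1 = Fintype.card ι) :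
    (Fintype.card ι : ℝ) = S + 1 ∧
    ∀ i j k, i ≠ j → j ≠ k → i ≠ k →
      inner ℝ (φ i) (φ j) * inner ℝ (φ j) (φ k) * inner ℝ (φ k) (φ i) = (-1 : ℝ) := by
  have hker : Module.finrank ℝ (LinearMap.ker (Fintype.linearCombination ℝ φ)) = 1 := by
    have := LinearMap.finrank_range_add_finrank_ker (Fintype.linearCombination ℝ φ)
    rw [Fintype.range_linearCombination, Module.finrank_fintype_fun_eq_card] at this
    omega
  obtain ⟨c, -, hc⟩ := finrank_eq_one_iff'.1 hker
  -- the columns of `A - G` lie in the kernel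
  have hcol : ∀ k, ∃ t : ℝ, ∀ i, t * c.1 i = (if i = k then A else 0) - inner ℝ (φ i) (φ k) := by
    intro k
    set m : ι → ℝ := fun i => (if i = k then A else 0) - inner ℝ (φ i) (φ k) with hm
    have horth : ∀ i, inner ℝ (φ i) (Fintype.linearCombination ℝ φ m) = (0 : ℝ) := by
      intro i
      rw [Fintype.linearCombination_apply, inner_sum]
      simp only [inner_smul_right, hm, sub_mul, ite_mul, zero_mul, Finset.sum_sub_distrib,
        Finset.sum_ite_eq', Finset.mem_univ, if_true]
      rw [← hA i k, sub_eq_zero]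
      exact Finset.sum_congr rfl fun j _ => mul_comm _ _
    have hz : Fintype.linearCombination ℝ φ m = 0 := by
      rw [← inner_self_eq_zero (𝕜 := ℝ)]
      conv_lhs => rw [Fintype.linearCombination_apply]
      rw [sum_inner]
      refine Finset.sum_eq_zero fun i _ => ?_
      rw [← Fintype.linearCombination_apply, inner_smul_left, horth, mul_zero]
    obtain ⟨t, ht⟩ := hc ⟨m, hz⟩
    refine ⟨t, fun i => ?_⟩
    have := congrFun (congrArg Subtype.val ht) i
    simpa using this
  choose t ht using hcol
  have hne : ∃ i j : ι, i ≠ j := by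
    by_contra! hcon
    have : Subsingleton ι := ⟨hcon⟩
    have h1 : Fintype.card ι ≤ 1 := Fintype.card_le_one_iff_subsingleton.2 this
    have h0 : 0 < Fintype.card ι := by omega
    obtain ⟨i⟩ := Fintype.card_pos_iff.1 h0
    have : FiniteDimensional ℝ (Submodule.span ℝ (Set.range φ)) :=
      FiniteDimensional.span_of_finite ℝ (Set.finite_range φ)
    have hb : Submodule.span ℝ (Set.range φ) = ⊥ := Submodule.finrank_eq_zero.1 (by omega)
    have : φ i ∈ Submodule.span ℝ (Set.range φ) := Submodule.subset_span ⟨i, rfl⟩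
    rw [hb, Submodule.mem_bot] at this
    have h2 := hd i
    rw [this, inner_zero_left] at h2
    linarith
  have hdg : ∀ i, t i * c.1 i = A - S := fun i => by
    rw [ht, if_pos rfl, hd]
  have hof : ∀ i j, i ≠ j → t j * c.1 i = - inner ℝ (φ i) (φ j) := fun i j hij => by
    rw [ht, if_neg hij, zero_sub]
  obtain ⟨i₀, j₀, h₀⟩ := hne
  have hn : S * S + ((Fintype.card ι : ℝ) - 1) = A * S := by
    have h1 := hA i₀ i₀
    rw [hd, ← Finset.add_sum_erase _ _ (Finset.mem_univ i₀), hd] at h1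
    rw [← h1]
    congr 1
    rw [Finset.sum_congr rfl (g := fun _ => (1 : ℝ))]
    · have hpos : 1 ≤ Fintype.card ι := Fintype.card_pos_iff.2 ⟨i₀⟩
      rw [Finset.sum_const, Finset.card_erase_of_mem (Finset.mem_univ _), Finset.card_univ]
      simp [Nat.cast_sub hpos]
    · intro j hj
      rw [real_inner_comm (φ i₀) (φ j)]
      have := ho i₀ j (Finset.ne_of_mem_erase hj).symm
      exact this
  have hsq : (A - S) * (A - S) = 1 := by
    have h1 := hof i₀ j₀ h₀
    have h2 := hof j₀ i₀ h₀.symm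
    rw [real_inner_comm] at h2
    have h3 := hdg i₀
    have h4 := hdg j₀
    have h5 := ho i₀ j₀ h₀
    calc (A - S) * (A - S) = (t i₀ * c.1 i₀) * (t j₀ * c.1 j₀) := by rw [h3, h4]
      _ = (t j₀ * c.1 i₀) * (t i₀ * c.1 j₀) := by ring
      _ = 1 := by rw [h1, h2]; linarith
  have hcard : (2 : ℝ) ≤ Fintype.card ι := by
    have : 1 < Fintype.card ι := Fintype.one_lt_card_iff.2 ⟨i₀, j₀, h₀⟩
    exact_mod_cast this
  have hA1 : A - S = 1 := by
    have h1 : 0 < A - S := by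
      by_contra! hcon
      nlinarith
    nlinarith
  refine ⟨by nlinarith, ?_⟩
  intro i j k hij hjk hik
  have h1 := hof i j hij
  have h2 := hof j k hjk
  have h3 := hof k i hik.symm
  have h4 : (t j * c.1 i) * (t k * c.1 j) * (t i * c.1 k) = 1 := by
    calc _ = (t i * c.1 i) * (t j * c.1 j) * (t k * c.1 k) := by ring
      _ = 1 := by rw [hdg, hdg, hdg, hA1]; norm_num
  rw [h1, h2, h3] at h4
  linarith

theorem zmod_two_odd (x y z : ZMod 2)
    (h : (-1 : ℝ) ^ x.val * (-1 : ℝ) ^ y.val * (-1 : ℝ) ^ z.val = -1) : x + y + z = 1 := by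
  have key : ∀ x y z : ZMod 2, x + y + z = 1 ∨ Even (x.val + y.val + z.val) := by decide
  rcases key x y z with h1 | h1
  · exact h1
  · rw [← pow_add, ← pow_add, h1.neg_one_pow] at h
    norm_num at h

/-- For `J > 4`, the binder of the ETF `Ψ̂_D` (the dual of the
sub-ETF `Ψ_D` of the dual symplectic ETF, indexed by an affine quadric `D` of
size `2^{J−1}(2^J+1)`) is empty; equivalently, there is no subset `K ⊆ D` with
`#K = 2^{J−1}+2` such that `B(v₁+v₃, v₂+v₃) = 1` for all pairwise distinct
`v₁, v₂, v₃ ∈ K`. -/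
theorem binder_of_Tremain_type_ETF_empty
    {J : ℕ} (hJ : 4 < J)
    {V : Type*} [AddCommGroup V] [Module (ZMod 2) V] [Fintype V] [DecidableEq V]
    (hdim : Module.finrank (ZMod 2) V = 2 * J)
    (B : V →ₗ[ZMod 2] V →ₗ[ZMod 2] ZMod 2) (hB : IsSymplectic B)
    (D : Finset V) (hD : IsAffineQuadric B (D : Set V))
    (hDcard : D.card = 2 ^ (J - 1) * (2 ^ J + 1))
    {E : Type*} [NormedAddCommGroup E] [InnerProductSpace ℝ E]
    (ψ : ↥D → E)
    (hdiag : ∀ v : ↥D, (inner ℝ (ψ v) (ψ v) : ℝ) = 2 ^ (J - 1) + 1)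
    (hoff : ∀ v₁ v₂ : ↥D, v₁ ≠ v₂ →
      (inner ℝ (ψ v₁) (ψ v₂) : ℝ) = (-1 : ℝ) ^ (B v₁.1 v₂.1).val) :
    binder ℝ ψ = ∅ ∧
    ¬∃ K : Finset V, (∀ v ∈ K, v ∈ D) ∧ K.card = 2 ^ (J - 1) + 2 ∧
      ∀ v₁ ∈ K, ∀ v₂ ∈ K, ∀ v₃ ∈ K,
        v₁ ≠ v₂ → v₂ ≠ v₃ → v₁ ≠ v₃ → B (v₁ + v₃) (v₂ + v₃) = 1 := by
  have hfin : ¬∃ K : Finset V, (∀ v ∈ K, v ∈ D) ∧ K.card = 2 ^ (J - 1) + 2 ∧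
      ∀ v₁ ∈ K, ∀ v₂ ∈ K, ∀ v₃ ∈ K,
        v₁ ≠ v₂ → v₂ ≠ v₃ → v₁ ≠ v₃ → B (v₁ + v₃) (v₂ + v₃) = 1 := by
    rintro ⟨K, -, hK, h⟩
    exact no_odd_set hJ hdim B hB.1 K hK h
  refine ⟨?_, hfin⟩
  rw [Set.eq_empty_iff_forall_notMem]
  rintro K ⟨⟨-, -, A, -, hA⟩, hr⟩
  apply hfin
  have himg : Set.range (fun k : K => ψ k.1) = ψ '' (K : Set ↥D) := by
    ext x; simp
  have hg := simplex_gram (fun k : K => ψ k.1) (2 ^ (J - 1) + 1) A (by positivity)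
    (fun i => hdiag i.1)
    (fun i j hij => by
      rw [hoff i.1 j.1 (fun hh => hij (Subtype.ext hh)), ← mul_pow]; norm_num)
    (fun i k => by simpa using hA i k)
    (by rw [himg, Fintype.card_coe]; exact hr)
  obtain ⟨hc, htri⟩ := hg
  rw [Fintype.card_coe] at hc
  refine ⟨K.map (Function.Embedding.subtype _), ?_, ?_, ?_⟩
  · intro v hv
    obtain ⟨w, -, rfl⟩ := Finset.mem_map.1 hv
    exact w.2
  · rw [Finset.card_map]
    have : (K.card : ℝ) = ((2 ^ (J - 1) + 2 : ℕ) : ℝ) := by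
      rw [hc]; push_cast; ring
    exact_mod_cast this
  · intro v₁ h₁ v₂ h₂ v₃ h₃ h12 h23 h13
    obtain ⟨w₁, k₁, rfl⟩ := Finset.mem_map.1 h₁
    obtain ⟨w₂, k₂, rfl⟩ := Finset.mem_map.1 h₂
    obtain ⟨w₃, k₃, rfl⟩ := Finset.mem_map.1 h₃
    simp only [Function.Embedding.coe_subtype] at h12 h23 h13 ⊢
    have n12 : w₁ ≠ w₂ := fun hh => h12 (congrArg _ hh)
    have n23 : w₂ ≠ w₃ := fun hh => h23 (congrArg _ hh)
    have n13 : w₁ ≠ w₃ := fun hh => h13 (congrArg _ hh)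
    have ht := htri ⟨w₁, k₁⟩ ⟨w₂, k₂⟩ ⟨w₃, k₃⟩ (fun hh => n12 (congrArg Subtype.val hh))
      (fun hh => n23 (congrArg Subtype.val hh)) (fun hh => n13 (congrArg Subtype.val hh))
    simp only at ht
    rw [hoff _ _ n12, hoff _ _ n23, hoff _ _ n13.symm] at ht
    have hz := zmod_two_odd _ _ _ ht
    have hsymm : ∀ x y : V, B x y = B y x := by
      intro x y
      have h1 := hB.1 (x + y)
      simp only [map_add, LinearMap.add_apply, hB.1, zero_add, add_zero] at h1
      have h2 : ∀ p q : ZMod 2, p + q = 0 → q = p := by decide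
      exact h2 _ _ h1
    simp only [map_add, LinearMap.add_apply, hB.1, add_zero]
    rw [hsymm w₁.1 w₃.1, hsymm w₃.1 w₂.1]
    rw [← hz]
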